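/- Every tempered distribution T ∈ 𝒮'(ℝ) can be written as T = ∂^m f for some m ∈ ℕ and some continuous slowly increasing function f (i.e., f continuous with |f(x)| ≤ k + |x|^k for some k), where ∂ is the distributional derivative. -/

import Mathlib

open MeasureTheory Set Filter Topology

noncomputable abbrev SD (h : SchwartzMap ℝ ℂ) : SchwartzMap ℝ ℂ := SchwartzMap.derivCLM ℂ ℂ h

noncomputable def wt (k : ℕ) (x : ℝ) : ℝ := (1 + x^2)^k

lemma wt_pos (k : ℕ) (x : ℝ) : 0 < wt k x := by unfold wt; positivity
lemma wt_cont (k : ℕ) : Continuous (wt k) := by unfold wt; fun_prop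
lemma wt_mono (k : ℕ) {x t : ℝ} (h : |x| ≤ |t|) : wt k x ≤ wt k t := by
  unfold wt
  have := sq_le_sq.mpr h
  gcongr
lemma wt_mono_k {k l : ℕ} (h : k ≤ l) (x : ℝ) : wt k x ≤ wt l x := by
  unfold wt
  exact pow_le_pow_right₀ (by nlinarith [sq_nonneg x]) h
lemma wt_succ (k : ℕ) (x : ℝ) : wt (k+1) x = wt k x * (1 + x^2) := by
  unfold wt; rw [pow_succ]

lemma wt_tg (k : ℕ) : Function.HasTemperateGrowth (fun x : ℝ => ((wt k x : ℝ) : ℂ)) := by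
  unfold wt
  fun_prop

noncomputable def SW (k : ℕ) : SchwartzMap ℝ ℂ →L[ℂ] SchwartzMap ℝ ℂ :=
  SchwartzMap.smulLeftCLM ℂ (fun x : ℝ => ((wt k x : ℝ) : ℂ))

lemma SW_apply (k : ℕ) (h : SchwartzMap ℝ ℂ) (x : ℝ) : SW k h x = (wt k x : ℂ) * h x := by
  unfold SW
  rw [SchwartzMap.smulLeftCLM_apply_apply (wt_tg k)]; rfl

lemma SW_norm (k : ℕ) (h : SchwartzMap ℝ ℂ) (x : ℝ) : ‖SW k h x‖ = wt k x * ‖h x‖ := by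
  rw [SW_apply, norm_mul, Complex.norm_real, Real.norm_of_nonneg (wt_pos k x).le]

lemma S_hasDeriv (h : SchwartzMap ℝ ℂ) (x : ℝ) : HasDerivAt h (SD h x) x := by
  rw [SD, SchwartzMap.derivCLM_apply]
  exact h.differentiableAt.hasDerivAt

lemma S_int (h : SchwartzMap ℝ ℂ) : Integrable h := h.integrable

lemma S_top (h : SchwartzMap ℝ ℂ) : Tendsto h atTop (𝓝 0) :=
  (zero_at_infty h).mono_left atTop_le_cocompact
lemma S_bot (h : SchwartzMap ℝ ℂ) : Tendsto h atBot (𝓝 0) :=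
  (zero_at_infty h).mono_left atBot_le_cocompact

lemma S_Ioi (h : SchwartzMap ℝ ℂ) (x : ℝ) : ∫ t in Ioi x, SD h t = - h x := by
  rw [integral_Ioi_of_hasDerivAt_of_tendsto' (f := h) (fun t _ => S_hasDeriv h t)
    (S_int _).integrableOn (S_top h), zero_sub]
lemma S_Iic (h : SchwartzMap ℝ ℂ) (x : ℝ) : ∫ t in Iic x, SD h t = h x := by
  rw [integral_Iic_of_hasDerivAt_of_tendsto' (f := h) (fun t _ => S_hasDeriv h t)
    (S_int _).integrableOn (S_bot h), sub_zero]

lemma SW_int (k : ℕ) (h : SchwartzMap ℝ ℂ) : Integrable (fun t => wt k t * ‖h t‖) := by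
  have := (S_int (SW k h)).norm
  simpa only [SW_norm] using this

lemma L1 (k : ℕ) (h : SchwartzMap ℝ ℂ) (x : ℝ) :
    wt k x * ‖h x‖ ≤ ∫ t, wt k t * ‖SD h t‖ := by
  have key : ∀ s : Set ℝ, MeasurableSet s → (∀ t ∈ s, |x| ≤ |t|) → ‖h x‖ = ‖∫ t in s, SD h t‖ →
      wt k x * ‖h x‖ ≤ ∫ t, wt k t * ‖SD h t‖ := by
    intro s hs hst he
    calc wt k x * ‖h x‖ ≤ wt k x * ∫ t in s, ‖SD h t‖ := by
          rw [he]
          exact mul_le_mul_of_nonneg_left (norm_integral_le_integral_norm _) (wt_pos k x).le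
      _ = ∫ t in s, wt k x * ‖SD h t‖ := by rw [integral_const_mul]
      _ ≤ ∫ t in s, wt k t * ‖SD h t‖ := by
          apply setIntegral_mono_on _ (SW_int k _).integrableOn hs
          · intro t ht
            exact mul_le_mul_of_nonneg_right (wt_mono k (hst t ht)) (norm_nonneg _)
          · exact ((S_int _).norm.const_mul _).integrableOn
      _ ≤ _ := setIntegral_le_integral (SW_int k _)
          (Eventually.of_forall fun t => mul_nonneg (wt_pos k t).le (norm_nonneg _))
  rcases le_total 0 x with hx | hx
  · refine key (Ioi x) measurableSet_Ioi (fun t ht => ?_) (by rw [S_Ioi, norm_neg])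
    exact abs_le_abs_of_nonneg hx (le_of_lt ht)
  · refine key (Iic x) measurableSet_Iic (fun t ht => ?_) (by rw [S_Iic])
    exact abs_le_abs_of_nonpos hx ht

lemma L2 (k : ℕ) (h : SchwartzMap ℝ ℂ) (B : ℝ) (hB : ∀ t, wt (k+1) t * ‖SD h t‖ ≤ B) (x : ℝ) :
    wt k x * ‖h x‖ ≤ Real.pi * B := by
  refine (L1 k h x).trans ?_
  rw [← integral_univ_inv_one_add_sq, ← integral_mul_const]
  refine integral_mono (SW_int k _) (integrable_inv_one_add_sq.mul_const _) fun t => ?_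
  have := hB t
  rw [wt_succ] at this
  have h1 : 0 < 1 + t^2 := by positivity
  rw [inv_mul_eq_div, le_div_iff₀ h1]
  linarith

lemma inv_memLp : MemLp (fun x : ℝ => (1 + x^2)⁻¹) 2 := by
  have hc : Continuous (fun x : ℝ => (1 + x^2)⁻¹) := by
    refine Continuous.inv₀ (by fun_prop) fun x => by positivity
  rw [memLp_two_iff_integrable_sq hc.aestronglyMeasurable]
  refine integrable_inv_one_add_sq.mono' (hc.pow 2).aestronglyMeasurable
    (Eventually.of_forall fun x => ?_)
  have : (1 + x^2)⁻¹ ≤ 1 := inv_le_one_of_one_le₀ (by nlinarith [sq_nonneg x])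
  have h0 : 0 < (1 + x^2)⁻¹ := by positivity
  rw [Real.norm_of_nonneg (by positivity)]
  nlinarith

lemma L3 : ∃ K : ℝ, 0 ≤ K ∧ ∀ (k : ℕ) (h : SchwartzMap ℝ ℂ) (x : ℝ),
    wt k x * ‖h x‖ ≤ K * ‖(SW (k+1) (SD h)).toLp 2 volume‖ := by
  refine ⟨(∫ x : ℝ, ((1 + x^2)⁻¹) ^ (2:ℝ)) ^ (1/2:ℝ), by positivity, fun k h x => ?_⟩
  refine (L1 k h x).trans ?_
  have e : ∀ t, wt k t * ‖SD h t‖ = (1+t^2)⁻¹ * ‖SW (k+1) (SD h) t‖ := by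
    intro t
    rw [SW_norm, wt_succ]
    have h1 : 0 < 1 + t^2 := by positivity
    field_simp
  simp_rw [e]
  rw [SchwartzMap.norm_toLp' (by norm_num) (by norm_num)]
  have := integral_mul_le_Lp_mul_Lq_of_nonneg (μ := volume) (p := 2) (q := 2)
    (f := fun t : ℝ => (1+t^2)⁻¹) (g := fun t => ‖SW (k+1) (SD h) t‖)
    (by constructor <;> norm_num) (Eventually.of_forall fun t => by positivity)
    (Eventually.of_forall fun t => by positivity) (by simpa using inv_memLp)
    (by simpa using (SchwartzMap.memLp (SW (k+1) (SD h)) 2 volume).norm)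
  rw [show ENNReal.toReal 2 = 2 by norm_num, ← one_div]
  exact this

lemma L4 (d : ℕ) : ∀ (k : ℕ) (h : SchwartzMap ℝ ℂ) (B : ℝ), (∀ t, wt (k+d) t * ‖SD^[d] h t‖ ≤ B) →
    ∀ x, wt k x * ‖h x‖ ≤ Real.pi ^ d * B := by
  induction d with
  | zero => intro k h B hB x; simpa using hB x
  | succ d ih =>
    intro k h B hB x
    rw [pow_succ', mul_assoc]
    refine L2 k h _ (fun t => ih (k+1) (SD h) B (fun s => ?_) t) x
    have := hB s
    rwa [Function.iterate_succ_apply, show k + (d+1) = k+1+d by ring] at this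

lemma SD_iter (m : ℕ) (h : SchwartzMap ℝ ℂ) : ⇑(SD^[m] h) = iteratedDeriv m h := by
  induction m with
  | zero => simp
  | succ m ih =>
    rw [Function.iterate_succ_apply', iteratedDeriv_succ, ← ih]
    ext x; exact SchwartzMap.derivCLM_apply _ _ _

lemma T_bound (T : SchwartzMap ℝ ℂ →L[ℂ] ℂ) : ∃ (N m : ℕ) (C : ℝ), 0 ≤ C ∧
    ∀ φ, ‖T φ‖ ≤ C * ‖(SW N (SD^[m] φ)).toLp 2 volume‖ := by
  obtain ⟨s, C, -, hC⟩ := Seminorm.bound_of_continuous (schwartz_withSeminorms ℂ ℝ ℂ)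
    ((normSeminorm ℂ ℂ).comp (T : SchwartzMap ℝ ℂ →ₗ[ℂ] ℂ)) (by
      exact continuous_norm.comp T.continuous)
  obtain ⟨K, hK, hL3⟩ := L3
  set J := s.sup Prod.fst
  set L := s.sup Prod.snd
  have hpi : (1:ℝ) ≤ Real.pi := by linarith [Real.pi_gt_three]
  refine ⟨J + L + 1, L + 1, C * (Real.pi ^ L * K), by positivity, fun φ => ?_⟩
  have h1 := hC φ
  have h2 : ‖T φ‖ ≤ C * (s.sup (schwartzSeminormFamily ℂ ℝ ℂ)) φ := h1
  refine h2.trans ?_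
  rw [mul_assoc]
  refine mul_le_mul_of_nonneg_left ?_ C.2
  refine Seminorm.finset_sup_apply_le (by positivity) fun i hi => ?_
  have hiJ : i.1 ≤ J := Finset.le_sup (f := Prod.fst) hi
  have hiL : i.2 ≤ L := Finset.le_sup (f := Prod.snd) hi
  refine SchwartzMap.seminorm_le_bound' ℂ i.1 i.2 φ (by positivity) fun x => ?_
  rw [← SD_iter]
  have hx : |x| ^ i.1 ≤ wt J x := by
    refine le_trans ?_ (wt_mono_k hiJ x)
    unfold wt
    gcongr
    nlinarith [sq_abs x, sq_nonneg (|x| - 1), abs_nonneg x]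
  have hB := hL3 (J + L) (SD^[L] φ)
  rw [← Function.iterate_succ_apply' SD] at hB
  set B := K * ‖(SW (J+L+1) (SD^[L+1] φ)).toLp 2 volume‖ with hBdef
  have hB0 : 0 ≤ B := by positivity
  have h4 := L4 (L - i.2) J (SD^[i.2] φ) B (fun t => ?_) x
  · calc |x| ^ i.1 * ‖(SD^[i.2] φ) x‖ ≤ wt J x * ‖(SD^[i.2] φ) x‖ := by gcongr
      _ ≤ Real.pi ^ (L - i.2) * B := h4
      _ ≤ Real.pi ^ L * B := by gcongr; omega
      _ = _ := by rw [hBdef]; ring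
  · rw [← Function.iterate_add_apply, Nat.sub_add_cancel hiL]
    refine le_trans ?_ (hB t)
    gcongr
    exact wt_mono_k (by omega) t

lemma T_repr (T : SchwartzMap ℝ ℂ →L[ℂ] ℂ) : ∃ (N m : ℕ) (G : Lp ℂ 2 (volume : Measure ℝ)),
    ∀ φ, T φ = inner ℂ G ((SW N (SD^[m] φ)).toLp 2 volume) := by
  obtain ⟨N, m, C, hC, hT⟩ := T_bound T
  set A : SchwartzMap ℝ ℂ →ₗ[ℂ] Lp ℂ 2 (volume : Measure ℝ) :=
    ((SchwartzMap.toLpCLM ℂ ℂ 2 volume ∘L SW N ∘L (SchwartzMap.derivCLM ℂ ℂ)^m :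
      SchwartzMap ℝ ℂ →L[ℂ] Lp ℂ 2 (volume : Measure ℝ)) :
      SchwartzMap ℝ ℂ →ₗ[ℂ] Lp ℂ 2 (volume : Measure ℝ)) with hA
  have hAφ : ∀ φ, A φ = (SW N (SD^[m] φ)).toLp 2 volume := by
    intro φ
    have : ((SchwartzMap.derivCLM ℂ ℂ)^m : SchwartzMap ℝ ℂ →L[ℂ] SchwartzMap ℝ ℂ) φ = SD^[m] φ := by
      rw [FunLike.coe_pow_eq_iterate]
    rw [← this]; rfl
  have hTA : ∀ φ, ‖T φ‖ ≤ C * ‖A φ‖ := fun φ => by rw [hAφ]; exact hT φ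
  have hker : LinearMap.ker A ≤ LinearMap.ker (T : SchwartzMap ℝ ℂ →ₗ[ℂ] ℂ) := by
    intro φ hφ
    have h := hTA φ
    rw [LinearMap.mem_ker.mp hφ, norm_zero, mul_zero] at h
    exact LinearMap.mem_ker.mpr (norm_le_zero_iff.mp h)
  let ℓ : LinearMap.range A →ₗ[ℂ] ℂ :=
    ((LinearMap.ker A).liftQ (T : SchwartzMap ℝ ℂ →ₗ[ℂ] ℂ) hker) ∘ₗ A.quotKerEquivRange.symm.toLinearMap
  have hℓ : ∀ φ, ℓ ⟨A φ, LinearMap.mem_range_self A φ⟩ = T φ := by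
    intro φ
    have : A.quotKerEquivRange.symm ⟨A φ, LinearMap.mem_range_self A φ⟩ = (LinearMap.ker A).mkQ φ :=
      LinearMap.quotKerEquivRange_symm_apply_image A φ _
    simp only [ℓ, LinearMap.comp_apply, LinearEquiv.coe_coe, this]
    simp
  let ℓc : StrongDual ℂ (LinearMap.range A) := ℓ.mkContinuous C (by
    rintro ⟨_, φ, rfl⟩
    rw [hℓ φ]
    exact hTA φ)
  obtain ⟨Λ, hΛ, -⟩ := exists_extension_norm_eq (𝕜 := ℂ) (LinearMap.range A) ℓc
  refine ⟨N, m, (InnerProductSpace.toDual ℂ _).symm Λ, fun φ => ?_⟩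
  rw [InnerProductSpace.toDual_symm_apply, ← hAφ, ← hℓ]
  exact (hΛ ⟨A φ, LinearMap.mem_range_self A φ⟩).symm

/-- kernel -/
noncomputable def KK (x t : ℝ) : ℂ :=
  if 0 < x then (if x < t then 1 else 0) else (if t ≤ x then -1 else 0)

lemma KK_meas : Measurable (Function.uncurry KK) := by
  unfold KK Function.uncurry
  refine Measurable.ite (measurableSet_lt measurable_const measurable_fst) ?_ ?_
  · exact Measurable.ite (measurableSet_lt measurable_fst measurable_snd)
      measurable_const measurable_const
  · exact Measurable.ite (measurableSet_le measurable_snd measurable_fst)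
      measurable_const measurable_const

lemma KK_bound (M : ℕ) (x t : ℝ) : wt M x * ‖KK x t‖ ≤ wt M t := by
  unfold KK
  have := (wt_pos M t).le
  split_ifs with h1 h2 h2
  · simpa using wt_mono M (abs_le_abs_of_nonneg h1.le h2.le)
  · simpa
  · simpa using wt_mono M (abs_le_abs_of_nonpos (not_lt.mp h1) h2)
  · simpa

lemma KK_psi (ψ : SchwartzMap ℝ ℂ) (x : ℝ) : ∫ t, KK x t * SD ψ t = - ψ x := by
  by_cases h : 0 < x
  · rw [← S_Ioi, ← integral_indicator measurableSet_Ioi]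
    congr 1; ext t
    by_cases h2 : x < t <;> simp [KK, h, h2, indicator]
  · rw [← S_Iic, ← integral_neg, ← integral_indicator measurableSet_Iic]
    congr 1; ext t
    by_cases h2 : t ≤ x <;> simp [KK, h, h2, indicator]

lemma KK_F (g : ℝ → ℂ) (t : ℝ) : ∫ x, g x * KK x t = ∫ x in (0:ℝ)..t, g x := by
  rcases lt_or_ge 0 t with ht | ht
  · rw [intervalIntegral.integral_of_le ht.le, integral_Ioc_eq_integral_Ioo,
      ← integral_indicator measurableSet_Ioo]
    congr 1; ext x
    by_cases h : 0 < x
    · by_cases h2 : x < t <;> simp [KK, h, h2, indicator]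
    · have : ¬ t ≤ x := by linarith
      simp [KK, h, this, indicator]
  · rw [intervalIntegral.integral_of_ge ht, ← integral_Icc_eq_integral_Ioc, ← integral_neg,
      ← integral_indicator measurableSet_Icc]
    congr 1; ext x
    by_cases h : 0 < x
    · have : ¬ x < t := by linarith
      simp [KK, h, this, indicator]
    · have h' := not_lt.mp h
      by_cases h2 : t ≤ x <;> simp [KK, h, h', h2, indicator]

lemma ibp (u : ℝ → ℂ) (hu : Integrable u) (M : ℕ) : ∃ F : ℝ → ℂ, Continuous F ∧
    (∀ t, ‖F t‖ ≤ (∫ x, ‖u x‖) * wt M t) ∧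
    ∀ ψ : SchwartzMap ℝ ℂ, ∫ x, u x * wt M x * ψ x = - ∫ t, F t * SD ψ t := by
  have hw : Continuous fun x : ℝ => ((wt M x : ℝ) : ℂ) := Complex.continuous_ofReal.comp (wt_cont M)
  have hloc : ∀ a b, IntervalIntegrable (fun x => u x * wt M x) volume a b := fun a b =>
    hu.intervalIntegrable.mul_continuousOn hw.continuousOn
  refine ⟨fun t => ∫ x in (0:ℝ)..t, u x * wt M x,
    intervalIntegral.continuous_primitive hloc 0, ?_, ?_⟩
  · intro t
    simp only
    rw [← KK_F, ← integral_mul_const]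
    refine norm_integral_le_of_norm_le (hu.norm.mul_const _) (Eventually.of_forall fun x => ?_)
    rw [norm_mul, norm_mul, mul_assoc, Complex.norm_real, Real.norm_of_nonneg (wt_pos M x).le]
    exact mul_le_mul_of_nonneg_left (KK_bound M x t) (norm_nonneg _)
  · intro ψ
    have hI : Integrable (Function.uncurry fun x t => u x * wt M x * (KK x t * SD ψ t))
        ((volume : Measure ℝ).prod volume) := by
      refine Integrable.mono' (hu.norm.mul_prod (SW_int M (SD ψ))) ?_ (Eventually.of_forall ?_)
      · refine AEStronglyMeasurable.mul ?_ (AEStronglyMeasurable.mul ?_ ?_)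
        · exact (hu.aestronglyMeasurable.mul hw.aestronglyMeasurable).comp_fst
        · exact KK_meas.aestronglyMeasurable
        · exact ((SD ψ).continuous.comp continuous_snd).aestronglyMeasurable
      · rintro ⟨x, t⟩
        simp only [Function.uncurry]
        rw [norm_mul, norm_mul, norm_mul, Complex.norm_real, Real.norm_of_nonneg (wt_pos M x).le]
        calc ‖u x‖ * wt M x * (‖KK x t‖ * ‖SD ψ t‖) = ‖u x‖ * ((wt M x * ‖KK x t‖) * ‖SD ψ t‖) := by ring
          _ ≤ _ := by gcongr; exact KK_bound M x t
    have := integral_integral_swap hI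
    simp_rw [integral_const_mul, KK_psi, ← mul_assoc, integral_mul_const, KK_F] at this
    rw [← this]
    simp [integral_neg]

lemma growth (C : ℝ) (M : ℕ) : ∃ k : ℕ, ∀ x : ℝ, C * wt M x ≤ (k:ℝ) + |x|^k := by
  obtain ⟨D, hD⟩ := exists_nat_ge (|C| * 2^M)
  refine ⟨(2*M+1) + D * (D+1)^(2*M), fun x => ?_⟩
  set k := (2*M+1) + D * (D+1)^(2*M) with hk
  have key : ∀ y : ℝ, 1 ≤ y → |x| ≤ y → C * wt M x ≤ D * y^(2*M) := by
    intro y hy hxy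
    have : wt M x ≤ 2^M * y^(2*M) := by
      rw [pow_mul, ← mul_pow]; unfold wt
      gcongr
      have : x^2 ≤ y^2 := by rw [← sq_abs x]; gcongr
      nlinarith
    calc C * wt M x ≤ |C| * (2^M * y^(2*M)) := by
          have := (wt_pos M x).le
          gcongr; exact le_abs_self C
      _ = |C| * 2^M * y^(2*M) := by ring
      _ ≤ _ := by gcongr
  rcases le_total |x| (D+1) with h | h
  · have h1 := key (D+1) (by linarith [Nat.cast_nonneg (α := ℝ) D]) h
    have h2 : (D:ℝ) * (D+1)^(2*M) ≤ k := by
      rw [hk]; push_cast; nlinarith [Nat.cast_nonneg (α := ℝ) M]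
    have := pow_nonneg (abs_nonneg x) k
    linarith
  · have hD0 := Nat.cast_nonneg (α := ℝ) D
    have h1 := key |x| (by linarith) le_rfl
    have h2 : (D:ℝ) * |x|^(2*M) ≤ |x|^(2*M+1) := by
      rw [pow_succ']; gcongr; linarith
    have h3 : |x|^(2*M+1) ≤ |x|^k := pow_le_pow_right₀ (by linarith) (by omega)
    linarith [Nat.cast_nonneg (α := ℝ) k]

theorem tempered_distribution_structure (T : SchwartzMap ℝ ℂ →L[ℂ] ℂ) :
    ∃ (m : ℕ) (f : ℝ → ℂ), Continuous f ∧
      (∃ k : ℕ, ∀ x : ℝ, ‖f x‖ ≤ (k : ℝ) + |x| ^ k) ∧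
      ∀ φ : SchwartzMap ℝ ℂ, T φ = (-1 : ℂ) ^ m * ∫ x : ℝ, f x * iteratedDeriv m (⇑φ) x := by
  obtain ⟨N, m, G, hG⟩ := T_repr T
  have hG2 : MemLp (fun x => (starRingEnd ℂ) (G x)) 2 volume :=
    (Lp.memLp G).star
  have hu : Integrable (fun x : ℝ => (starRingEnd ℂ) (G x) * (((1 + x^2)⁻¹ : ℝ) : ℂ)) :=
    hG2.integrable_mul (q := 2) inv_memLp.ofReal
  obtain ⟨F, hFc, hFb, hF⟩ := ibp _ hu (N+1)
  obtain ⟨k, hk⟩ := growth (∫ x : ℝ, ‖(starRingEnd ℂ) (G x) * (((1 + x^2)⁻¹ : ℝ) : ℂ)‖) (N+1)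
  refine ⟨m+1, fun x => (-1)^m * F x, by fun_prop, ⟨k, fun x => ?_⟩, fun φ => ?_⟩
  · simpa using (hFb x).trans (hk x)
  · rw [hG, MeasureTheory.L2.inner_def, ← SD_iter, Function.iterate_succ_apply']
    simp_rw [mul_assoc, integral_const_mul]
    have e : ((-1:ℂ)^(m+1) * ((-1)^m * ∫ x, F x * SD (SD^[m] φ) x)) = - ∫ x, F x * SD (SD^[m] φ) x := by
      have : ((-1:ℂ)^m * (-1)^m) = 1 := by rw [← mul_pow]; simp
      rw [pow_succ]
      linear_combination (-∫ x, F x * SD (SD^[m] φ) x) * this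
    rw [e, ← hF]
    refine integral_congr_ae ?_
    filter_upwards [SchwartzMap.coeFn_toLp (SW N (SD^[m] φ)) 2 volume] with x hx
    rw [hx, SW_apply, wt_succ, RCLike.inner_apply]
    have h1 : (1 + (x:ℂ)^2) ≠ 0 := by
      have : (1 + x^2 : ℝ) ≠ 0 := by positivity
      exact_mod_cast this
    push_cast
    field_simp
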